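/- Define q̄(βJ, βb) = liminf_{N→∞} E[q_N] for the quantum Sherrington–Kirkpatrick model with parameters βJ and βb. Then for all βJ ≥ 1 and b ≥ 0, setting a_b = √(2·ln(cosh(βb))), one has q̄(βJ, βb) ≥ q̄(βJ + a_b, 0) − 3βb. -/

import Mathlib

open Matrix MeasureTheory ProbabilityTheory

noncomputable section

abbrev Conf (N : ℕ) := Fin N → Fin 2

def Sz (N : ℕ) (j : Fin N) : Matrix (Conf N) (Conf N) ℂ :=
  Matrix.diagonal fun σ => if σ j = 0 then 1 else -1

def Sx (N : ℕ) (j : Fin N) : Matrix (Conf N) (Conf N) ℂ :=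
  Matrix.of fun σ τ => if τ = Function.update σ j (1 - σ j) then 1 else 0

def UN (N : ℕ) (g : Fin N → Fin N → ℝ) : Matrix (Conf N) (Conf N) ℂ :=
  (-(1 / Real.sqrt N)) • ∑ j : Fin N, ∑ k : Fin N,
    if j < k then g j k • (Sz N j * Sz N k) else 0

def HN (N : ℕ) (J b : ℝ) (g : Fin N → Fin N → ℝ) : Matrix (Conf N) (Conf N) ℂ :=
  J • UN N g - b • ∑ j : Fin N, Sx N j

/-- Gibbs expectation (real part of the trace ratio). -/
def gibbs {n : Type*} [Fintype n] [DecidableEq n] (β : ℝ) (H A : Matrix n n ℂ) : ℝ :=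
  ((NormedSpace.exp ((-β) • H) * A).trace / (NormedSpace.exp ((-β) • H)).trace).re

def qN (N : ℕ) (β J b : ℝ) (g : Fin N → Fin N → ℝ) : ℝ :=
  (2 / ((N : ℝ) * ((N : ℝ) - 1))) * ∑ j : Fin N, ∑ k : Fin N,
    if j < k then (gibbs β (HN N J b g) (Sz N j * Sz N k)) ^ 2 else 0

/-- `q̄(c, d) = liminf_N E[q_N]` for the model with parameters `c = βJ` and `d = βb`. -/
def qbar {Ω : Type*} [MeasurableSpace Ω] (μ : Measure Ω)
    (g : (N : ℕ) → Ω → Fin N → Fin N → ℝ) (c d : ℝ) : ℝ :=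
  Filter.liminf (fun N : ℕ => ∫ ω, qN N 1 c d (g N ω) ∂μ) Filter.atTop

/-!
Write `X = -βH_N = c (-U_N) + d ∑ j, S_j^x` with `c = βJ`, `d = βb`, and `Z(X) = Tr e^X`.
Conjugation by `S_j^z` reverses `S_j^x` and fixes the rest of `X`. Hence, as a function of the
coefficient of a single `S_j^x`, the partition function has vanishing derivative at `0`; its
second derivative is at most `Z` itself, so it grows no faster than `cosh`. This gives
`⟨S_j^x⟩ ≤ tanh d` and, with `a² = 2 log cosh d`, the bounds
`log Z(c, 0) ≤ log Z(c, d) ≤ log Z(c, 0) + N a² / 2`.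

By convexity of `log Z` along the segments from `(c, d)` to `(c + a, d)` and from `(c, 0)` to
`(c + a, 0)`, these bounds turn into `a ⟨-U_N⟩_{c, d} ≤ a ⟨-U_N⟩_{c + a, 0} + N a² / 2`.

Gaussian integration by parts gives `E⟨-U_N⟩ = (c / N) ∑ E[(K, K) - ⟨K⟩²]`, the sum being over the
terms `K = S_j^z S_k^z` and `(·, ·)` denoting the Duhamel two-point function. As `K² = 1`, one has
`1 - 2 d tanh d ≤ (K, K) ≤ 1`, where the lower bound measures how far `K` is from commuting with
`X`. Inserting this on both sides leaves a linear inequality between the two values of `E[q_N]`,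
which yields the loss `3 d` as long as `d < 1/3`; beyond that, `0 ≤ q_N ≤ 1` suffices.
-/

open NormedSpace (exp)

section ExpDerivative

variable {𝔸 : Type*} [NormedRing 𝔸] [NormedAlgebra ℝ 𝔸] [CompleteSpace 𝔸]

/-- The integrand of Duhamel's formula: the path from `exp X * B` to `B * exp Y` in a Banach
algebra. -/
def duhamelIntegrand (X Y B : 𝔸) (s : ℝ) : 𝔸 := exp ((1 - s) • X) * B * exp (s • Y)

@[fun_prop]
theorem continuous_duhamelIntegrand {α : Type*} [TopologicalSpace α] {X Y : α → 𝔸} {s : α → ℝ}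
    (hX : Continuous X) (hY : Continuous Y) (hs : Continuous s) (B : 𝔸) :
    Continuous fun a => duhamelIntegrand (X a) (Y a) B (s a) := by
  let +nondep : NormedAlgebra ℚ 𝔸 := .restrictScalars ℚ ℝ 𝔸
  have hexp : Continuous (exp : 𝔸 → 𝔸) := NormedSpace.exp_continuous
  exact ((hexp.comp (by fun_prop)).mul continuous_const).mul (hexp.comp (by fun_prop))

theorem hasDerivAt_exp_mul_exp (X Y : 𝔸) (s : ℝ) :
    HasDerivAt (fun s : ℝ => exp ((1 - s) • X) * exp (s • Y))
      (duhamelIntegrand X Y (Y - X) s) s := by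
  have hX : HasDerivAt (fun s : ℝ => exp ((1 - s) • X)) (-(exp ((1 - s) • X) * X)) s := by
    simpa [Function.comp_def] using
      (hasDerivAt_exp_smul_const X (1 - s)).scomp s ((hasDerivAt_id s).const_sub 1)
  refine (hX.mul (hasDerivAt_exp_smul_const' Y s)).congr_deriv ?_
  unfold duhamelIntegrand
  noncomm_ring

theorem exp_sub_exp_eq_integral (X Y : 𝔸) :
    exp Y - exp X = ∫ s in (0 : ℝ)..1, duhamelIntegrand X Y (Y - X) s := by
  have hcont : Continuous (duhamelIntegrand X Y (Y - X)) := by fun_prop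
  rw [intervalIntegral.integral_eq_sub_of_hasDerivAt
    (fun s _ => hasDerivAt_exp_mul_exp X Y s) (hcont.intervalIntegrable 0 1)]
  simp

theorem hasDerivAt_exp_add_smul (X B : 𝔸) (x : ℝ) :
    HasDerivAt (fun x : ℝ => exp (X + x • B))
      (∫ s in (0 : ℝ)..1, duhamelIntegrand (X + x • B) (X + x • B) B s) x := by
  have hcont : Continuous fun y : ℝ =>
      ∫ s in (0 : ℝ)..1, duhamelIntegrand (X + x • B) (X + y • B) B s :=
    intervalIntegral.continuous_parametric_intervalIntegral_of_continuous' (by fun_prop) 0 1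
  rw [hasDerivAt_iff_tendsto_slope]
  refine ((hcont.tendsto x).mono_left nhdsWithin_le_nhds).congr' ?_
  filter_upwards [self_mem_nhdsWithin] with y hy
  have hsub : X + y • B - (X + x • B) = (y - x) • B := by rw [sub_smul]; abel
  rw [slope_def_module, exp_sub_exp_eq_integral, hsub, eq_inv_smul_iff₀ (sub_ne_zero.2 hy),
    ← intervalIntegral.integral_smul]
  simp only [duhamelIntegrand, mul_smul_comm, smul_mul_assoc]

end ExpDerivative

open scoped Matrix.Norms.L2Operator

section TraceInequalities

variable {n : Type*} [Fintype n]

/-- The real part of the trace, as a real linear functional on complex matrices. -/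
def reTrace : Matrix n n ℂ →ₗ[ℝ] ℝ := Complex.reLm ∘ₗ Matrix.traceLinearMap n ℝ ℂ

theorem reTrace_apply (A : Matrix n n ℂ) : reTrace A = A.trace.re := rfl

theorem reTrace_mul_comm (A B : Matrix n n ℂ) : reTrace (A * B) = reTrace (B * A) := by
  rw [reTrace_apply, reTrace_apply, Matrix.trace_mul_comm]

theorem continuous_reTrace : Continuous (reTrace : Matrix n n ℂ → ℝ) :=
  Complex.continuous_re.comp continuous_id.matrix_trace

theorem reTrace_diagonal_mul_mul_diagonal_mul_conjTranspose [DecidableEq n]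
    (f g : n → ℝ) (W : Matrix n n ℂ) :
    reTrace (diagonal (fun i => (f i : ℂ)) * W * diagonal (fun i => (g i : ℂ)) * Wᴴ) =
      ∑ i, ∑ j, Complex.normSq (W i j) * (f i * g j) := by
  rw [reTrace_apply, Matrix.trace, Complex.re_sum]
  refine Finset.sum_congr rfl fun i _ => ?_
  rw [Matrix.diag_apply, Matrix.mul_apply, Complex.re_sum]
  refine Finset.sum_congr rfl fun j _ => ?_
  have hterm : (f i : ℂ) * W i j * g j * star (W i j) =
      ((Complex.normSq (W i j) * (f i * g j) : ℝ) : ℂ) := by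
    rw [Complex.ofReal_mul, ← Complex.mul_conj, starRingEnd_apply]
    push_cast
    ring
  rw [Matrix.mul_diagonal, Matrix.diagonal_mul, Matrix.conjTranspose_apply, hterm,
    Complex.ofReal_re]

variable [DecidableEq n]

theorem reTrace_cfc_mul_mul_cfc_mul_conjTranspose {X Y : Matrix n n ℂ} (hX : X.IsHermitian)
    (hY : Y.IsHermitian) (A : Matrix n n ℂ) (f g : ℝ → ℝ) :
    reTrace (cfc f X * A * cfc g Y * Aᴴ) =
      ∑ i, ∑ j, Complex.normSq
          (((hX.eigenvectorUnitary : Matrix n n ℂ)ᴴ * A * hY.eigenvectorUnitary) i j) *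
        (f (hX.eigenvalues i) * g (hY.eigenvalues j)) := by
  rw [hX.cfc_eq, hY.cfc_eq, ← reTrace_diagonal_mul_mul_diagonal_mul_conjTranspose,
    Matrix.IsHermitian.cfc, Matrix.IsHermitian.cfc, Unitary.conjStarAlgAut_apply,
    Unitary.conjStarAlgAut_apply]
  simp only [Matrix.mul_assoc]
  rw [reTrace_mul_comm]
  simp only [Matrix.star_eq_conjTranspose, Matrix.conjTranspose_mul,
    Matrix.conjTranspose_conjTranspose, Matrix.mul_assoc]
  rfl

/-- Klein's principle: a pointwise inequality between sums of products of functions of `x` and `y`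
passes to traces. -/
theorem sum_mul_reTrace_cfc_nonneg {ι : Type*} {s : Finset ι} {c : ι → ℝ} {f g : ι → ℝ → ℝ}
    (hfg : ∀ x y, 0 ≤ ∑ k ∈ s, c k * (f k x * g k y)) {X Y : Matrix n n ℂ} (hX : X.IsHermitian)
    (hY : Y.IsHermitian) (A : Matrix n n ℂ) :
    0 ≤ ∑ k ∈ s, c k * reTrace (cfc (f k) X * A * cfc (g k) Y * Aᴴ) := by
  simp only [reTrace_cfc_mul_mul_cfc_mul_conjTranspose hX hY, Finset.mul_sum]
  rw [Finset.sum_comm]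
  refine Finset.sum_nonneg fun i _ => ?_
  rw [Finset.sum_comm]
  refine Finset.sum_nonneg fun j _ => ?_
  rw [← Finset.sum_congr rfl fun k _ => mul_left_comm _ (c k) _, ← Finset.mul_sum]
  exact mul_nonneg (Complex.normSq_nonneg _) (hfg _ _)

theorem exp_eq_cfc {X : Matrix n n ℂ} (hX : X.IsHermitian) : exp X = cfc Real.exp X :=
  (CFC.real_exp_eq_normedSpace_exp hX).symm

theorem exp_smul_eq_cfc {X : Matrix n n ℂ} (hX : X.IsHermitian) (s : ℝ) :
    exp (s • X) = cfc (fun x => Real.exp (s * x)) X := by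
  rw [exp_eq_cfc (IsSelfAdjoint.smul (.all s) hX), ← cfc_comp_smul s Real.exp X]
  rfl

theorem exp_mul_self_eq_cfc {X : Matrix n n ℂ} (hX : X.IsHermitian) :
    exp X * X = cfc (fun x => Real.exp x * x) X := by
  rw [cfc_mul Real.exp (fun x => x) X, ← exp_eq_cfc hX, cfc_id' ℝ X hX.isSelfAdjoint]

end TraceInequalities

section GibbsState

variable {n : Type*} [Fintype n] [DecidableEq n]

/-- The partition function `Tr e^X`; the inverse temperature and the sign of the Hamiltonian are
absorbed into the exponent `X = -βH`. -/
def partitionFn (X : Matrix n n ℂ) : ℝ := reTrace (exp X)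

/-- The Gibbs expectation `A ↦ Tr(e^X A) / Tr e^X`, as a real linear functional. -/
def gibbsState (X : Matrix n n ℂ) : Matrix n n ℂ →ₗ[ℝ] ℝ :=
  (partitionFn X)⁻¹ • (reTrace ∘ₗ LinearMap.mulLeft ℝ (exp X))

theorem gibbsState_apply (X A : Matrix n n ℂ) :
    gibbsState X A = reTrace (exp X * A) / partitionFn X := by
  rw [div_eq_inv_mul]
  rfl

theorem trace_exp_of_isHermitian {X : Matrix n n ℂ} (hX : X.IsHermitian) :
    (exp X).trace = ∑ i, (Real.exp (hX.eigenvalues i) : ℂ) := by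
  rw [exp_eq_cfc hX, hX.cfc_eq, Matrix.IsHermitian.cfc,
    Unitary.conjStarAlgAut_apply, Matrix.trace_mul_cycle, Unitary.coe_star_mul_self,
    Matrix.one_mul, Matrix.trace_diagonal]
  rfl

theorem partitionFn_eq_sum {X : Matrix n n ℂ} (hX : X.IsHermitian) :
    partitionFn X = ∑ i, Real.exp (hX.eigenvalues i) := by
  rw [partitionFn, reTrace_apply, trace_exp_of_isHermitian hX, ← Complex.ofReal_sum,
    Complex.ofReal_re]

theorem gibbs_eq_gibbsState {β : ℝ} {H : Matrix n n ℂ} (hX : ((-β) • H).IsHermitian)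
    (A : Matrix n n ℂ) : gibbs β H A = gibbsState ((-β) • H) A := by
  rw [gibbs, gibbsState_apply, partitionFn_eq_sum hX, trace_exp_of_isHermitian hX,
    ← Complex.ofReal_sum, Complex.div_ofReal_re, reTrace_apply]

theorem partitionFn_nonneg {X : Matrix n n ℂ} (hX : X.IsHermitian) : 0 ≤ partitionFn X := by
  rw [partitionFn_eq_sum hX]
  positivity

theorem partitionFn_pos [Nonempty n] {X : Matrix n n ℂ} (hX : X.IsHermitian) :
    0 < partitionFn X := by
  rw [partitionFn_eq_sum hX]
  exact Finset.sum_pos (fun i _ => Real.exp_pos _) Finset.univ_nonempty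

theorem reTrace_exp_mul_eq [Nonempty n] {X : Matrix n n ℂ} (hX : X.IsHermitian)
    (A : Matrix n n ℂ) : reTrace (exp X * A) = gibbsState X A * partitionFn X := by
  rw [gibbsState_apply, div_mul_cancel₀ _ (partitionFn_pos hX).ne']

theorem gibbsState_one [Nonempty n] {X : Matrix n n ℂ} (hX : X.IsHermitian) :
    gibbsState X 1 = 1 := by
  rw [gibbsState_apply, Matrix.mul_one]
  exact div_self (partitionFn_pos hX).ne'

theorem partitionFn_add_smul_one (X : Matrix n n ℂ) (r : ℝ) :
    partitionFn (X + r • 1) = Real.exp r * partitionFn X := by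
  have hscalar : exp (r • (1 : Matrix n n ℂ)) = Real.exp r • 1 := by
    rw [← Algebra.algebraMap_eq_smul_one, ← Algebra.algebraMap_eq_smul_one, Real.exp_eq_exp_ℝ,
      NormedSpace.algebraMap_exp_comm]
  rw [partitionFn, Matrix.exp_add_of_commute _ _ ((Commute.one_right X).smul_right r), hscalar,
    Matrix.mul_smul, Matrix.mul_one, map_smul]
  rfl

theorem partitionFn_add_reTrace_exp_mul_sub_le {X Y : Matrix n n ℂ} (hX : X.IsHermitian)
    (hY : Y.IsHermitian) :
    partitionFn X + reTrace (exp X * (Y - X)) ≤ partitionFn Y := by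
  have hpos : ∀ x y : ℝ, 0 ≤ ∑ k : Fin 4, (![1, -1, 1, -1] : Fin 4 → ℝ) k *
      ((![1, Real.exp, fun x => Real.exp x * x, Real.exp] : Fin 4 → ℝ → ℝ) k x *
        (![Real.exp, 1, 1, id] : Fin 4 → ℝ → ℝ) k y) := by
    intro x y
    have hexp : Real.exp x * (y - x + 1) ≤ Real.exp y := by
      calc Real.exp x * (y - x + 1) ≤ Real.exp x * Real.exp (y - x) := by
            gcongr; exact Real.add_one_le_exp _
        _ = Real.exp y := by rw [← Real.exp_add, add_sub_cancel]
    simp only [Fin.sum_univ_four, Matrix.cons_val, Pi.one_apply, id]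
    linarith
  have hklein := sum_mul_reTrace_cfc_nonneg hpos hX hY 1
  simp only [Fin.sum_univ_four, Matrix.cons_val, cfc_one ℝ X hX.isSelfAdjoint,
    cfc_one ℝ Y hY.isSelfAdjoint, cfc_id ℝ Y hY.isSelfAdjoint, ← exp_eq_cfc hX, ← exp_eq_cfc hY,
    ← exp_mul_self_eq_cfc hX, Matrix.conjTranspose_one, Matrix.mul_one, Matrix.one_mul] at hklein
  rw [Matrix.mul_sub, map_sub, partitionFn, partitionFn]
  linarith

/-- The Peierls–Bogoliubov inequality. -/
theorem log_partitionFn_add_gibbsState_le [Nonempty n] {X Y : Matrix n n ℂ} (hX : X.IsHermitian)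
    (hY : Y.IsHermitian) :
    Real.log (partitionFn X) + gibbsState X Y ≤ Real.log (partitionFn (X + Y)) := by
  set t := gibbsState X Y with ht
  have hklein := partitionFn_add_reTrace_exp_mul_sub_le hX
    ((hX.add hY).add (IsSelfAdjoint.smul (.all (-t)) (.one (Matrix n n ℂ))))
  have hmean : reTrace (exp X * (X + Y + (-t) • 1 - X)) = 0 := by
    rw [add_assoc, add_sub_cancel_left, reTrace_exp_mul_eq hX, map_add, map_smul,
      gibbsState_one hX, ← ht, smul_eq_mul, mul_one, add_neg_cancel, zero_mul]
  rw [hmean, add_zero, partitionFn_add_smul_one] at hklein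
  have hlog := Real.log_le_log (partitionFn_pos hX) hklein
  rw [Real.log_mul (Real.exp_pos _).ne' (partitionFn_pos (hX.add hY)).ne', Real.log_exp] at hlog
  linarith

theorem gibbsState_mul_conjTranspose_nonneg {X : Matrix n n ℂ} (hX : X.IsHermitian)
    (A : Matrix n n ℂ) : 0 ≤ gibbsState X (A * Aᴴ) := by
  have hpos : ∀ x y : ℝ, 0 ≤ ∑ k : Unit, (fun _ => (1 : ℝ)) k *
      ((fun _ => Real.exp) k x * (fun _ => (1 : ℝ → ℝ)) k y) := fun x _ => by
    simpa using (Real.exp_pos x).le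
  have hklein := sum_mul_reTrace_cfc_nonneg hpos hX hX A
  simp only [Fintype.sum_unique, one_mul, cfc_one ℝ X hX.isSelfAdjoint, ← exp_eq_cfc hX,
    Matrix.mul_one, Matrix.mul_assoc] at hklein
  rw [gibbsState_apply]
  exact div_nonneg hklein (partitionFn_nonneg hX)

theorem gibbsState_le_one [Nonempty n] {X A : Matrix n n ℂ} (hX : X.IsHermitian)
    (hA : A.IsHermitian) (hA2 : A * A = 1) : gibbsState X A ≤ 1 := by
  have hsq : (1 - A) * (1 - A)ᴴ = (2 : ℝ) • (1 - A) := by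
    rw [Matrix.conjTranspose_sub, Matrix.conjTranspose_one, hA.eq, two_smul]
    linear_combination (norm := noncomm_ring) hA2
  have hnonneg := gibbsState_mul_conjTranspose_nonneg hX (1 - A)
  rw [hsq, map_smul, map_sub, gibbsState_one hX, smul_eq_mul] at hnonneg
  linarith

theorem abs_gibbsState_le_one [Nonempty n] {X A : Matrix n n ℂ} (hX : X.IsHermitian)
    (hA : A.IsHermitian) (hA2 : A * A = 1) : |gibbsState X A| ≤ 1 := by
  have hneg := gibbsState_le_one hX hA.neg (by rwa [neg_mul_neg])
  rw [map_neg] at hneg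
  exact abs_le.2 ⟨neg_le.1 hneg, gibbsState_le_one hX hA hA2⟩

theorem gibbsState_sq_le_one [Nonempty n] {X A : Matrix n n ℂ} (hX : X.IsHermitian)
    (hA : A.IsHermitian) (hA2 : A * A = 1) : gibbsState X A ^ 2 ≤ 1 :=
  (sq_le_one_iff_abs_le_one _).2 (abs_gibbsState_le_one hX hA hA2)

end GibbsState

section DuhamelTwoPoint

variable {n : Type*} [Fintype n] [DecidableEq n]

/-- The Duhamel (Bogoliubov) two-point function `(A, A)` of the Gibbs state of `X`. -/
def duhamelCorr (X A : Matrix n n ℂ) : ℝ :=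
  (∫ s in (0 : ℝ)..1, reTrace (duhamelIntegrand X X A s * A)) / partitionFn X

@[fun_prop]
theorem continuous_reTrace_duhamelIntegrand {α : Type*} [TopologicalSpace α]
    {X Y : α → Matrix n n ℂ} {s : α → ℝ} (hX : Continuous X) (hY : Continuous Y)
    (hs : Continuous s) (A B : Matrix n n ℂ) :
    Continuous fun a => reTrace (duhamelIntegrand (X a) (Y a) B (s a) * A) :=
  continuous_reTrace.comp ((continuous_duhamelIntegrand hX hY hs B).mul continuous_const)

theorem hasDerivAt_reTrace_exp_mul (X A B : Matrix n n ℂ) (x : ℝ) :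
    HasDerivAt (fun x : ℝ => reTrace (exp (X + x • B) * A))
      (∫ s in (0 : ℝ)..1, reTrace (duhamelIntegrand (X + x • B) (X + x • B) B s * A)) x := by
  let L : Matrix n n ℂ →L[ℝ] ℝ :=
    ⟨reTrace ∘ₗ LinearMap.mulRight ℝ A, continuous_reTrace.comp (continuous_mul_const A)⟩
  refine (L.hasFDerivAt.comp_hasDerivAt x (hasDerivAt_exp_add_smul X B x)).congr_deriv ?_
  refine (L.intervalIntegral_comp_comm (Continuous.intervalIntegrable ?_ 0 1)).symm
  fun_prop

theorem hasDerivAt_partitionFn (X B : Matrix n n ℂ) (x : ℝ) :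
    HasDerivAt (fun x : ℝ => partitionFn (X + x • B)) (reTrace (exp (X + x • B) * B)) x := by
  have hconst (Y : Matrix n n ℂ) (s : ℝ) :
      reTrace (duhamelIntegrand Y Y B s) = reTrace (exp Y * B) := by
    have hcomm : Commute (s • Y) ((1 - s) • Y) := ((Commute.refl Y).smul_left s).smul_right (1 - s)
    rw [duhamelIntegrand, reTrace_mul_comm, ← Matrix.mul_assoc,
      ← Matrix.exp_add_of_commute _ _ hcomm, ← add_smul, add_sub_cancel, one_smul]
  simpa only [hconst, intervalIntegral.integral_const, sub_zero, one_smul, Matrix.mul_one] using!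
    hasDerivAt_reTrace_exp_mul X 1 B x

theorem integral_reTrace_duhamelIntegrand [Nonempty n] {X : Matrix n n ℂ} (hX : X.IsHermitian)
    (A : Matrix n n ℂ) : ∫ s in (0 : ℝ)..1, reTrace (duhamelIntegrand X X A s * A) =
      duhamelCorr X A * partitionFn X :=
  (div_mul_cancel₀ _ (partitionFn_pos hX).ne').symm

theorem hasDerivAt_log_partitionFn [Nonempty n] {X B : Matrix n n ℂ} (hX : X.IsHermitian)
    (hB : B.IsHermitian) (x : ℝ) :
    HasDerivAt (fun x : ℝ => Real.log (partitionFn (X + x • B))) (gibbsState (X + x • B) B) x := by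
  rw [gibbsState_apply]
  exact (hasDerivAt_partitionFn X B x).log
    (partitionFn_pos (hX.add (IsSelfAdjoint.smul (.all x) hB))).ne'

theorem hasDerivAt_gibbsState [Nonempty n] {X A : Matrix n n ℂ} (hX : X.IsHermitian)
    (hA : A.IsHermitian) (x : ℝ) :
    HasDerivAt (fun x : ℝ => gibbsState (X + x • A) A)
      (duhamelCorr (X + x • A) A - gibbsState (X + x • A) A ^ 2) x := by
  have hZ := (partitionFn_pos (hX.add (IsSelfAdjoint.smul (.all x) hA))).ne'
  simp only [gibbsState_apply]
  refine ((hasDerivAt_reTrace_exp_mul X A A x).div (hasDerivAt_partitionFn X A x) hZ).congr_deriv ?_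
  rw [duhamelCorr]
  field_simp

theorem reTrace_duhamelIntegrand_nonneg {X A : Matrix n n ℂ} (hX : X.IsHermitian)
    (hA : A.IsHermitian) (s : ℝ) : 0 ≤ reTrace (duhamelIntegrand X X A s * A) := by
  have hpos : ∀ x y : ℝ, 0 ≤ ∑ k : Unit, (fun _ => (1 : ℝ)) k *
      ((fun _ x => Real.exp ((1 - s) * x)) k x * (fun _ y => Real.exp (s * y)) k y) :=
    fun x y => by simp only [Fintype.sum_unique]; positivity
  have hklein := sum_mul_reTrace_cfc_nonneg hpos hX hX A
  simpa only [Fintype.sum_unique, one_mul, ← exp_smul_eq_cfc hX, hA.eq] using! hklein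

theorem reTrace_duhamelIntegrand_le {X A : Matrix n n ℂ} (hX : X.IsHermitian)
    (hA : A.IsHermitian) {s : ℝ} (hs : s ∈ Set.Icc (0 : ℝ) 1) :
    reTrace (duhamelIntegrand X X A s * A) ≤ reTrace (exp X * (A * A)) := by
  have hpos : ∀ x y : ℝ, 0 ≤ ∑ k : Fin 3, (![1 - s, s, -1] : Fin 3 → ℝ) k *
      ((![Real.exp, 1, fun x => Real.exp ((1 - s) * x)] : Fin 3 → ℝ → ℝ) k x *
        (![1, Real.exp, fun y => Real.exp (s * y)] : Fin 3 → ℝ → ℝ) k y) := by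
    intro x y
    have hconvex := convexOn_exp.2 (Set.mem_univ x) (Set.mem_univ y) (sub_nonneg.2 hs.2) hs.1
      (sub_add_cancel 1 s)
    simp only [smul_eq_mul, Real.exp_add] at hconvex
    simp only [Fin.sum_univ_three, Matrix.cons_val, Pi.one_apply]
    linarith
  have hklein := sum_mul_reTrace_cfc_nonneg hpos hX hX A
  have hcyc : reTrace (A * (exp X * A)) = reTrace (exp X * (A * A)) := by
    rw [reTrace_mul_comm, Matrix.mul_assoc]
  simp only [Fin.sum_univ_three, Matrix.cons_val, cfc_one ℝ X hX.isSelfAdjoint, ← exp_eq_cfc hX,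
    ← exp_smul_eq_cfc hX, hA.eq, Matrix.one_mul, Matrix.mul_assoc, hcyc] at hklein
  simp only [duhamelIntegrand, Matrix.mul_assoc]
  linarith

theorem le_reTrace_duhamelIntegrand {X A : Matrix n n ℂ} (hX : X.IsHermitian)
    (hA : A.IsHermitian) (s : ℝ) :
    reTrace (exp X * (A * A)) - s * reTrace (exp X * ((X * A - A * X) * A)) ≤
      reTrace (duhamelIntegrand X X A s * A) := by
  have hpos : ∀ x y : ℝ, 0 ≤ ∑ k : Fin 4, (![1, -1, -s, s] : Fin 4 → ℝ) k *
      ((![fun x => Real.exp ((1 - s) * x), Real.exp, Real.exp, fun x => Real.exp x * x] :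
          Fin 4 → ℝ → ℝ) k x *
        (![fun y => Real.exp (s * y), 1, id, 1] : Fin 4 → ℝ → ℝ) k y) := by
    intro x y
    have htangent : Real.exp x * (s * (y - x) + 1) ≤
        Real.exp ((1 - s) * x) * Real.exp (s * y) := by
      calc _ ≤ Real.exp x * Real.exp (s * (y - x)) := by gcongr; exact Real.add_one_le_exp _
        _ = _ := by rw [← Real.exp_add, ← Real.exp_add]; ring_nf
    simp only [Fin.sum_univ_four, Matrix.cons_val, Pi.one_apply, id]
    linarith
  have hklein := sum_mul_reTrace_cfc_nonneg hpos hX hX A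
  simp only [Fin.sum_univ_four, Matrix.cons_val, cfc_one ℝ X hX.isSelfAdjoint,
    cfc_id ℝ X hX.isSelfAdjoint, ← exp_eq_cfc hX, ← exp_smul_eq_cfc hX, ← exp_mul_self_eq_cfc hX,
    hA.eq, Matrix.one_mul, Matrix.mul_assoc] at hklein
  simp only [duhamelIntegrand, Matrix.sub_mul, Matrix.mul_sub, map_sub, Matrix.mul_assoc]
  linarith

theorem duhamelCorr_nonneg {X A : Matrix n n ℂ} (hX : X.IsHermitian) (hA : A.IsHermitian) :
    0 ≤ duhamelCorr X A :=
  div_nonneg (intervalIntegral.integral_nonneg zero_le_one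
    fun s _ => reTrace_duhamelIntegrand_nonneg hX hA s) (partitionFn_nonneg hX)

theorem duhamelCorr_le {X A : Matrix n n ℂ} (hX : X.IsHermitian) (hA : A.IsHermitian) :
    duhamelCorr X A ≤ gibbsState X (A * A) := by
  rw [duhamelCorr, gibbsState_apply]
  refine div_le_div_of_nonneg_right ?_ (partitionFn_nonneg hX)
  calc _ ≤ ∫ _ in (0 : ℝ)..1, reTrace (exp X * (A * A)) :=
        intervalIntegral.integral_mono_on zero_le_one
          (Continuous.intervalIntegrable (by fun_prop) 0 1) intervalIntegrable_const
          fun s hs => reTrace_duhamelIntegrand_le hX hA hs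
    _ = _ := by rw [intervalIntegral.integral_const, sub_zero, one_smul]

theorem duhamelCorr_le_one [Nonempty n] {X A : Matrix n n ℂ} (hX : X.IsHermitian)
    (hA : A.IsHermitian) (hA2 : A * A = 1) : duhamelCorr X A ≤ 1 := by
  simpa only [hA2, gibbsState_one hX] using duhamelCorr_le hX hA

theorem abs_duhamelCorr_sub_sq_le_one [Nonempty n] {X A : Matrix n n ℂ} (hX : X.IsHermitian)
    (hA : A.IsHermitian) (hA2 : A * A = 1) : |duhamelCorr X A - gibbsState X A ^ 2| ≤ 1 :=
  abs_le.2 ⟨by linarith [duhamelCorr_nonneg hX hA, gibbsState_sq_le_one hX hA hA2],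
    by linarith [duhamelCorr_le_one hX hA hA2, sq_nonneg (gibbsState X A)]⟩

theorem le_duhamelCorr {X A : Matrix n n ℂ} (hX : X.IsHermitian) (hA : A.IsHermitian) :
    gibbsState X (A * A) - gibbsState X ((X * A - A * X) * A) / 2 ≤ duhamelCorr X A := by
  rw [duhamelCorr, gibbsState_apply, gibbsState_apply, div_right_comm, ← sub_div]
  refine div_le_div_of_nonneg_right ?_ (partitionFn_nonneg hX)
  calc _ = ∫ s in (0 : ℝ)..1, (reTrace (exp X * (A * A)) -
        s * reTrace (exp X * ((X * A - A * X) * A))) := by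
        rw [intervalIntegral.integral_sub intervalIntegrable_const
            (Continuous.intervalIntegrable (by fun_prop) 0 1),
          intervalIntegral.integral_const, intervalIntegral.integral_mul_const, integral_id]
        norm_num
        ring
    _ ≤ _ := intervalIntegral.integral_mono_on zero_le_one
          (Continuous.intervalIntegrable (by fun_prop) 0 1)
          (Continuous.intervalIntegrable (by fun_prop) 0 1)
          fun s _ => le_reTrace_duhamelIntegrand hX hA s

section Continuity

variable {α : Type*} [TopologicalSpace α] {X : α → Matrix n n ℂ}

theorem continuous_reTrace_exp_mul (hX : Continuous X) (A : Matrix n n ℂ) :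
    Continuous fun a => reTrace (exp (X a) * A) := by
  simpa only [duhamelIntegrand, sub_zero, zero_smul, NormedSpace.exp_zero, one_smul,
    Matrix.mul_one] using
    continuous_reTrace_duhamelIntegrand hX hX (continuous_const (y := 0)) A 1

theorem continuous_partitionFn (hX : Continuous X) : Continuous fun a => partitionFn (X a) := by
  simpa only [Matrix.mul_one] using! continuous_reTrace_exp_mul hX 1

theorem continuous_gibbsState [Nonempty n] (hX : Continuous X) (hH : ∀ a, (X a).IsHermitian)
    (A : Matrix n n ℂ) : Continuous fun a => gibbsState (X a) A := by
  simp only [gibbsState_apply]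
  exact (continuous_reTrace_exp_mul hX A).div (continuous_partitionFn hX)
    fun a => (partitionFn_pos (hH a)).ne'

theorem continuous_duhamelCorr [Nonempty n] (hX : Continuous X) (hH : ∀ a, (X a).IsHermitian)
    (A : Matrix n n ℂ) : Continuous fun a => duhamelCorr (X a) A :=
  (intervalIntegral.continuous_parametric_intervalIntegral_of_continuous'
    (by fun_prop) 0 1).div (continuous_partitionFn hX) fun a => (partitionFn_pos (hH a)).ne'

end Continuity

end DuhamelTwoPoint

section Reflection

/-- The function `f sinh - T cosh` is monotone, since its derivative is `(f - T') cosh`. -/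
theorem mul_cosh_le_mul_sinh {f T T' : ℝ → ℝ} (hf : ∀ t, HasDerivAt f (T t) t)
    (hT : ∀ t, HasDerivAt T (T' t) t) (hle : ∀ t, T' t ≤ f t) (hT0 : T 0 = 0) {t : ℝ}
    (ht : 0 ≤ t) : T t * Real.cosh t ≤ f t * Real.sinh t := by
  have hderiv (s : ℝ) : HasDerivAt (fun s => f s * Real.sinh s - T s * Real.cosh s)
      ((f s - T' s) * Real.cosh s) s :=
    (((hf s).mul (Real.hasDerivAt_sinh s)).sub ((hT s).mul (Real.hasDerivAt_cosh s))).congr_deriv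
      (by ring)
  have hmono : Monotone fun s => f s * Real.sinh s - T s * Real.cosh s :=
    monotone_of_deriv_nonneg (fun s => (hderiv s).differentiableAt) fun s => by
      rw [(hderiv s).deriv]
      exact mul_nonneg (sub_nonneg.2 (hle s)) (Real.cosh_pos s).le
  have h0 := hmono ht
  simp only [hT0, Real.sinh_zero, mul_zero, zero_mul, sub_zero] at h0
  linarith

variable {n : Type*} [Fintype n] [DecidableEq n] {A : Matrix n n ℂ}

theorem reTrace_exp_conj (hA : A * A = 1) (X B : Matrix n n ℂ) :
    reTrace (exp (A * X * A) * B) = reTrace (exp X * (A * B * A)) := by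
  have hconj : exp (A * X * A) = A * exp X * A := Matrix.exp_units_conj ⟨A, A, hA, hA⟩ X
  rw [hconj, Matrix.mul_assoc, Matrix.mul_assoc, reTrace_mul_comm, Matrix.mul_assoc]

theorem gibbsState_eq_zero_of_conj {X B : Matrix n n ℂ} (hA : A * A = 1) (hAX : A * X * A = X)
    (hAB : A * B * A = -B) : gibbsState X B = 0 := by
  have hodd := reTrace_exp_conj hA X B
  rw [hAX, hAB, Matrix.mul_neg, map_neg, self_eq_neg] at hodd
  rw [gibbsState_apply, hodd, zero_div]

theorem gibbsState_add_smul_le_tanh [Nonempty n] {Y B : Matrix n n ℂ} (hY : Y.IsHermitian)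
    (hB : B.IsHermitian) (hB2 : B * B = 1) (hA : A * A = 1) (hAY : A * Y * A = Y)
    (hAB : A * B * A = -B) {t : ℝ} (ht : 0 ≤ t) : gibbsState (Y + t • B) B ≤ Real.tanh t := by
  have hX (s : ℝ) : (Y + s • B).IsHermitian := hY.add (IsSelfAdjoint.smul (.all s) hB)
  have hsecond (s : ℝ) :
      duhamelCorr (Y + s • B) B * partitionFn (Y + s • B) ≤ partitionFn (Y + s • B) :=
    mul_le_of_le_one_left (partitionFn_nonneg (hX s)) (duhamelCorr_le_one (hX s) hB hB2)
  have hzero : reTrace (exp (Y + (0 : ℝ) • B) * B) = 0 := by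
    rw [zero_smul, add_zero, reTrace_exp_mul_eq hY, gibbsState_eq_zero_of_conj hA hAY hAB,
      zero_mul]
  have hcompare := mul_cosh_le_mul_sinh (hasDerivAt_partitionFn Y B)
    (fun s => integral_reTrace_duhamelIntegrand (hX s) B ▸ hasDerivAt_reTrace_exp_mul Y B B s)
    hsecond hzero ht
  rw [gibbsState_apply, Real.tanh_eq_sinh_div_cosh,
    div_le_div_iff₀ (partitionFn_pos (hX t)) (Real.cosh_pos t)]
  linarith

end Reflection

section GaussianIntegrationByParts

theorem hasDerivAt_gaussianPDFReal (m : ℝ) (v : NNReal) (x : ℝ) :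
    HasDerivAt (gaussianPDFReal m v) (-((x - m) / v * gaussianPDFReal m v x)) x := by
  have hsq : HasDerivAt (fun x : ℝ => -(x - m) ^ 2 / (2 * v)) (-((x - m) / v)) x :=
    ((((hasDerivAt_id x).sub_const m).pow 2).neg.div_const (2 * (v : ℝ))).congr_deriv
      (by rw [← mul_div_mul_left (x - m) (v : ℝ) two_ne_zero]; simp [neg_div])
  rw [gaussianPDFReal_def]
  exact (hsq.exp.const_mul _).congr_deriv (by ring)

theorem integrable_gaussianReal_iff {m : ℝ} {v : NNReal} (hv : v ≠ 0) {F : ℝ → ℝ} :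
    Integrable F (gaussianReal m v) ↔ Integrable fun x => F x * gaussianPDFReal m v x := by
  rw [gaussianReal_of_var_ne_zero m hv, integrable_withDensity_iff (measurable_gaussianPDF m v)
    (.of_forall fun _ => gaussianPDF_lt_top)]
  simp only [toReal_gaussianPDF]

theorem integral_sub_mean_mul_gaussianReal {m : ℝ} {v : NNReal} {F F' : ℝ → ℝ}
    (hF : ∀ x, HasDerivAt F (F' x) x) (hint : Integrable F (gaussianReal m v))
    (hint' : Integrable F' (gaussianReal m v))
    (hmul : Integrable (fun x => (x - m) * F x) (gaussianReal m v)) :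
    ∫ x, (x - m) * F x ∂gaussianReal m v = v * ∫ x, F' x ∂gaussianReal m v := by
  rcases eq_or_ne v 0 with rfl | hv
  · simp
  have hv' : (v : ℝ) ≠ 0 := NNReal.coe_ne_zero.2 hv
  rw [integrable_gaussianReal_iff hv] at hint hint' hmul
  have hparts := integral_mul_deriv_eq_deriv_mul_of_integrable (fun x _ => hF x)
    (fun x _ => hasDerivAt_gaussianPDFReal m v x)
    ((hmul.const_mul (-(v : ℝ)⁻¹)).congr (.of_forall fun x => by
      simp only [Pi.mul_apply]; ring)) hint' hint
  rw [integral_gaussianReal_eq_integral_smul hv, integral_gaussianReal_eq_integral_smul hv]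
  simp only [smul_eq_mul]
  calc ∫ x, gaussianPDFReal m v x * ((x - m) * F x)
      = -v * ∫ x, F x * -((x - m) / v * gaussianPDFReal m v x) := by
        rw [← integral_const_mul]
        congr 1 with x
        field_simp
    _ = v * ∫ x, gaussianPDFReal m v x * F' x := by
        rw [hparts, neg_mul_neg]
        simp only [mul_comm]

theorem integral_sub_mean_mul_prod {E : Type*} [MeasurableSpace E] {ν : Measure E} [SFinite ν]
    {m : ℝ} {v : NNReal} {F F' : ℝ × E → ℝ}
    (hF : ∀ x e, HasDerivAt (fun x => F (x, e)) (F' (x, e)) x)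
    (hint : Integrable F ((gaussianReal m v).prod ν))
    (hint' : Integrable F' ((gaussianReal m v).prod ν))
    (hmul : Integrable (fun p => (p.1 - m) * F p) ((gaussianReal m v).prod ν)) :
    ∫ p, (p.1 - m) * F p ∂(gaussianReal m v).prod ν =
      v * ∫ p, F' p ∂(gaussianReal m v).prod ν := by
  rw [integral_prod_symm _ hmul, integral_prod_symm _ hint', ← integral_const_mul]
  refine integral_congr_ae ?_
  filter_upwards [hint.prod_left_ae, hint'.prod_left_ae, hmul.prod_left_ae] with e h h' hm
  exact integral_sub_mean_mul_gaussianReal (fun x => hF x e) h h' hm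

variable {Ω : Type*} [MeasurableSpace Ω] {μ : Measure Ω}

theorem integral_sub_mean_mul_of_indepFun [IsFiniteMeasure μ] {E : Type*} [MeasurableSpace E]
    {m : ℝ} {v : NNReal} {ξ : Ω → ℝ} {η : Ω → E} (hξ : Measurable ξ) (hη : Measurable η)
    (hlaw : μ.map ξ = gaussianReal m v) (hindep : IndepFun ξ η μ) {F F' : ℝ × E → ℝ}
    (hF : Measurable F) (hF' : Measurable F')
    (hderiv : ∀ x e, HasDerivAt (fun x => F (x, e)) (F' (x, e)) x)
    (hint : Integrable (fun ω => F (ξ ω, η ω)) μ) (hint' : Integrable (fun ω => F' (ξ ω, η ω)) μ)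
    (hmul : Integrable (fun ω => (ξ ω - m) * F (ξ ω, η ω)) μ) :
    ∫ ω, (ξ ω - m) * F (ξ ω, η ω) ∂μ = v * ∫ ω, F' (ξ ω, η ω) ∂μ := by
  have hprod : μ.map (fun ω => (ξ ω, η ω)) = (gaussianReal m v).prod (μ.map η) := by
    rw [← hlaw]
    exact (indepFun_iff_map_prod_eq_prod_map_map hξ.aemeasurable hη.aemeasurable).1 hindep
  have hpair : Measurable fun ω => (ξ ω, η ω) := hξ.prodMk hη
  have hFmul : Measurable fun p : ℝ × E => (p.1 - m) * F p := by fun_prop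
  have transfer {G : ℝ × E → ℝ} (hG : Measurable G) : ∫ ω, G (ξ ω, η ω) ∂μ =
      ∫ p, G p ∂(gaussianReal m v).prod (μ.map η) := by
    rw [← hprod, integral_map hpair.aemeasurable hG.aestronglyMeasurable]
  have transfer_integrable {G : ℝ × E → ℝ} (hG : Measurable G)
      (h : Integrable (fun ω => G (ξ ω, η ω)) μ) :
      Integrable G ((gaussianReal m v).prod (μ.map η)) := by
    rw [← hprod]
    exact (integrable_map_measure hG.aestronglyMeasurable hpair.aemeasurable).2 h
  rw [transfer hFmul, transfer hF']
  exact integral_sub_mean_mul_prod hderiv (transfer_integrable hF hint)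
    (transfer_integrable hF' hint') (transfer_integrable hFmul hmul)

theorem integrable_comp_of_continuous_of_bound [IsFiniteMeasure μ] {E : Type*} [TopologicalSpace E]
    [MeasurableSpace E] [BorelSpace E] {η : Ω → E} (hη : Measurable η) {F : E → ℝ}
    (hF : Continuous F) {C : ℝ} (hC : ∀ y, |F y| ≤ C) : Integrable (fun ω => F (η ω)) μ :=
  .of_bound (hF.measurable.comp hη).aestronglyMeasurable C (.of_forall fun _ => hC _)

theorem integrable_of_map_eq_gaussianReal {m : ℝ} {v : NNReal} {ξ : Ω → ℝ} (hξ : Measurable ξ)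
    (hlaw : μ.map ξ = gaussianReal m v) : Integrable ξ μ := by
  have hid : Integrable id (gaussianReal m v) := (memLp_id_gaussianReal 1).integrable le_rfl
  rw [← hlaw] at hid
  exact hid.comp_measurable hξ

variable {ι : Type*} [Finite ι] [DecidableEq ι] {ξ : ι → Ω → ℝ}

theorem indepFun_update_const (hξ : ∀ i, Measurable (ξ i)) (hindep : iIndepFun ξ μ) (i : ι)
    (r : ℝ) : IndepFun (ξ i) (fun ω => Function.update (fun j => ξ j ω) i r) μ := by
  have := Fintype.ofFinite ι
  have hdisj : Disjoint {i} (Finset.univ.erase i) := by simp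
  let extend (u : Finset.univ.erase i → ℝ) (j : ι) : ℝ :=
    if h : j ∈ Finset.univ.erase i then u ⟨j, h⟩ else r
  have hextend : Measurable extend := measurable_pi_lambda _ fun j => by
    by_cases h : j ∈ Finset.univ.erase i <;> simp only [extend, h, dite_true, dite_false] <;>
      fun_prop
  convert! (hindep.indepFun_finset {i} _ hdisj hξ).comp
    (measurable_pi_apply (⟨i, Finset.mem_singleton_self i⟩ : ({i} : Finset ι))) hextend using 1
  ext ω j
  rcases eq_or_ne j i with rfl | h <;> simp [extend, *]

theorem integral_sub_mean_mul_of_iIndepFun [IsFiniteMeasure μ] {m : ℝ} {v : NNReal}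
    (hξ : ∀ i, Measurable (ξ i)) (hindep : iIndepFun ξ μ) {i : ι}
    (hlaw : μ.map (ξ i) = gaussianReal m v) {F F' : (ι → ℝ) → ℝ} (hF : Measurable F)
    (hF' : Measurable F')
    (hderiv : ∀ y x, HasDerivAt (fun x => F (Function.update y i x)) (F' (Function.update y i x)) x)
    (hint : Integrable (fun ω => F fun j => ξ j ω) μ)
    (hint' : Integrable (fun ω => F' fun j => ξ j ω) μ)
    (hmul : Integrable (fun ω => (ξ i ω - m) * F fun j => ξ j ω) μ) :
    ∫ ω, (ξ i ω - m) * F (fun j => ξ j ω) ∂μ = v * ∫ ω, F' (fun j => ξ j ω) ∂μ := by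
  have hupdate : Measurable fun p : ℝ × (ι → ℝ) => Function.update p.2 i p.1 :=
    measurable_update'.comp measurable_swap
  have hself (ω : Ω) : Function.update (Function.update (fun j => ξ j ω) i 0) i (ξ i ω) =
      fun j => ξ j ω := by
    rw [Function.update_idem, Function.update_eq_self i fun j => ξ j ω]
  have hparts := integral_sub_mean_mul_of_indepFun (hξ i)
    (measurable_update_left.comp (measurable_pi_lambda _ hξ)) hlaw
    (indepFun_update_const hξ hindep i 0) (hF.comp hupdate) (hF'.comp hupdate)
    (fun x y => hderiv y x)
  simp only [Function.comp_apply, hself] at hparts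
  exact hparts hint hint' hmul

end GaussianIntegrationByParts

section RandomInteraction

variable {n ι : Type*} [Fintype ι]

/-- The interaction `∑ i, y i • K i` with couplings `y`. -/
def interaction (K : ι → Matrix n n ℂ) (y : ι → ℝ) : Matrix n n ℂ := ∑ i, y i • K i

/-- The exponent `-βH` of a system with deterministic part `Y` and an interaction of strength `θ`
and couplings `y`. -/
def coupledExponent (Y : Matrix n n ℂ) (K : ι → Matrix n n ℂ) (θ : ℝ) (y : ι → ℝ) :
    Matrix n n ℂ := Y + θ • interaction K y

variable {Y : Matrix n n ℂ} {K : ι → Matrix n n ℂ}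

theorem isHermitian_interaction (hK : ∀ i, (K i).IsHermitian) (y : ι → ℝ) :
    (interaction K y).IsHermitian :=
  isSelfAdjoint_sum _ fun i _ => IsSelfAdjoint.smul (.all (y i)) (hK i)

theorem isHermitian_coupledExponent (hY : Y.IsHermitian) (hK : ∀ i, (K i).IsHermitian) (θ : ℝ)
    (y : ι → ℝ) : (coupledExponent Y K θ y).IsHermitian :=
  hY.add (IsSelfAdjoint.smul (.all θ) (isHermitian_interaction hK y))

theorem continuous_coupledExponent (Y : Matrix n n ℂ) (K : ι → Matrix n n ℂ) (θ : ℝ) :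
    Continuous (coupledExponent Y K θ) := by
  unfold coupledExponent interaction
  fun_prop

theorem interaction_update [DecidableEq ι] (K : ι → Matrix n n ℂ) (y : ι → ℝ) (i : ι) (x : ℝ) :
    interaction K (Function.update y i x) =
      interaction K (Function.update y i 0) + x • K i := by
  simp only [interaction, ← Finset.add_sum_erase _ _ (Finset.mem_univ i), Function.update_self,
    zero_smul, zero_add, add_comm (x • K i)]
  congr 1
  refine Finset.sum_congr rfl fun j hj => ?_
  rw [Function.update_of_ne (Finset.ne_of_mem_erase hj),
    Function.update_of_ne (Finset.ne_of_mem_erase hj)]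

variable [Fintype n] [DecidableEq n]

theorem gibbsState_interaction (X : Matrix n n ℂ) (K : ι → Matrix n n ℂ) (y : ι → ℝ) :
    gibbsState X (interaction K y) = ∑ i, y i * gibbsState X (K i) := by
  simp only [interaction, map_sum, map_smul, smul_eq_mul]

/-- The spin-glass order parameter: the average of `⟨K i⟩²` over the interaction terms `K i`. -/
def overlap (X : Matrix n n ℂ) (K : ι → Matrix n n ℂ) : ℝ :=
  (∑ i, gibbsState X (K i) ^ 2) / Fintype.card ι

theorem card_mul_overlap (X : Matrix n n ℂ) (K : ι → Matrix n n ℂ) :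
    Fintype.card ι * overlap X K = ∑ i, gibbsState X (K i) ^ 2 := by
  rw [overlap]
  rcases isEmpty_or_nonempty ι with _ | _
  · simp
  · exact mul_div_cancel₀ _ (Nat.cast_ne_zero.2 Fintype.card_ne_zero)

theorem overlap_nonneg (X : Matrix n n ℂ) (K : ι → Matrix n n ℂ) : 0 ≤ overlap X K := by
  unfold overlap
  positivity

variable [Nonempty n]

theorem overlap_le_one {X : Matrix n n ℂ} (hX : X.IsHermitian) (hK : ∀ i, (K i).IsHermitian)
    (hK2 : ∀ i, K i * K i = 1) : overlap X K ≤ 1 := by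
  refine div_le_one_of_le₀ ?_ (Nat.cast_nonneg _)
  simpa using Finset.sum_le_sum fun i (_ : i ∈ Finset.univ) =>
    gibbsState_sq_le_one hX (hK i) (hK2 i)

theorem hasDerivAt_gibbsState_update [DecidableEq ι] (hY : Y.IsHermitian)
    (hK : ∀ i, (K i).IsHermitian) (θ : ℝ) (y : ι → ℝ) (i : ι) (x : ℝ) :
    HasDerivAt (fun x => gibbsState (coupledExponent Y K θ (Function.update y i x)) (K i))
      (θ * (duhamelCorr (coupledExponent Y K θ (Function.update y i x)) (K i) -
        gibbsState (coupledExponent Y K θ (Function.update y i x)) (K i) ^ 2)) x := by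
  obtain ⟨Y₀, hY₀, hline⟩ : ∃ Y₀ : Matrix n n ℂ, Y₀.IsHermitian ∧ ∀ x,
      coupledExponent Y K θ (Function.update y i x) = Y₀ + (θ * x) • K i :=
    ⟨_, isHermitian_coupledExponent hY hK θ (Function.update y i 0), fun x => by
      rw [coupledExponent, interaction_update, smul_add, smul_smul, ← add_assoc, coupledExponent]⟩
  simp only [hline]
  exact ((hasDerivAt_gibbsState hY₀ (hK i) (θ * x)).comp x
    ((hasDerivAt_id x).const_mul θ)).congr_deriv (by rw [mul_one, mul_comm])

variable {Ω : Type*} [MeasurableSpace Ω] {μ : Measure Ω} {ξ : ι → Ω → ℝ}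

section Integrable

variable [IsFiniteMeasure μ]

theorem integrable_gibbsState (hY : Y.IsHermitian) (hK : ∀ i, (K i).IsHermitian)
    (hξ : ∀ i, Measurable (ξ i)) (θ : ℝ) {A : Matrix n n ℂ} (hA : A.IsHermitian)
    (hA2 : A * A = 1) :
    Integrable (fun ω => gibbsState (coupledExponent Y K θ fun j => ξ j ω) A) μ :=
  integrable_comp_of_continuous_of_bound (measurable_pi_lambda _ hξ)
    (continuous_gibbsState (continuous_coupledExponent Y K θ)
      (isHermitian_coupledExponent hY hK θ) A)
    fun y => abs_gibbsState_le_one (isHermitian_coupledExponent hY hK θ y) hA hA2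

theorem integrable_duhamelCorr_sub_sq (hY : Y.IsHermitian) (hK : ∀ i, (K i).IsHermitian)
    (hξ : ∀ i, Measurable (ξ i)) (θ : ℝ) {A : Matrix n n ℂ} (hA : A.IsHermitian)
    (hA2 : A * A = 1) :
    Integrable (fun ω => duhamelCorr (coupledExponent Y K θ fun j => ξ j ω) A -
      gibbsState (coupledExponent Y K θ fun j => ξ j ω) A ^ 2) μ :=
  have hX := isHermitian_coupledExponent hY hK θ
  have hcont := continuous_coupledExponent Y K θ
  integrable_comp_of_continuous_of_bound (measurable_pi_lambda _ hξ)
    ((continuous_duhamelCorr hcont hX A).sub ((continuous_gibbsState hcont hX A).pow 2))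
    fun y => abs_duhamelCorr_sub_sq_le_one (hX y) hA hA2

theorem integrable_overlap (hY : Y.IsHermitian) (hK : ∀ i, (K i).IsHermitian)
    (hK2 : ∀ i, K i * K i = 1) (hξ : ∀ i, Measurable (ξ i)) (θ : ℝ) :
    Integrable (fun ω => overlap (coupledExponent Y K θ fun j => ξ j ω) K) μ := by
  have hX := isHermitian_coupledExponent hY hK θ
  refine integrable_comp_of_continuous_of_bound (measurable_pi_lambda _ hξ)
    (F := fun y => overlap (coupledExponent Y K θ y) K) (C := 1) ?_ fun y => ?_
  · exact (continuous_finsetSum _ fun i _ =>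
      (continuous_gibbsState (continuous_coupledExponent Y K θ) hX (K i)).pow 2).div_const _
  · rw [abs_of_nonneg (overlap_nonneg _ _)]
    exact overlap_le_one (hX y) hK hK2

theorem integrable_mul_gibbsState (hY : Y.IsHermitian) (hK : ∀ i, (K i).IsHermitian)
    (hξ : ∀ i, Measurable (ξ i)) (θ : ℝ) {A : Matrix n n ℂ} (hA : A.IsHermitian)
    (hA2 : A * A = 1) {i : ι} (hint : Integrable (ξ i) μ) :
    Integrable (fun ω => ξ i ω * gibbsState (coupledExponent Y K θ fun j => ξ j ω) A) μ :=
  hint.mul_bdd (integrable_gibbsState hY hK hξ θ hA hA2).aestronglyMeasurable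
    (.of_forall fun _ =>
      abs_gibbsState_le_one (isHermitian_coupledExponent hY hK θ _) hA hA2)

theorem integrable_gibbsState_interaction (hY : Y.IsHermitian) (hK : ∀ i, (K i).IsHermitian)
    (hK2 : ∀ i, K i * K i = 1) (hξ : ∀ i, Measurable (ξ i)) (hint : ∀ i, Integrable (ξ i) μ)
    (θ : ℝ) : Integrable (fun ω => gibbsState (coupledExponent Y K θ fun j => ξ j ω)
      (interaction K fun j => ξ j ω)) μ := by
  simp only [gibbsState_interaction]
  exact integrable_finsetSum _ fun i _ =>
    integrable_mul_gibbsState hY hK hξ θ (hK i) (hK2 i) (hint i)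

end Integrable

variable [IsProbabilityMeasure μ]

theorem integral_mul_gibbsState (hY : Y.IsHermitian) (hK : ∀ i, (K i).IsHermitian)
    (hξ : ∀ i, Measurable (ξ i)) (hindep : iIndepFun ξ μ) (θ : ℝ) {i : ι}
    (hK2 : K i * K i = 1) (hlaw : μ.map (ξ i) = gaussianReal 0 1) :
    ∫ ω, ξ i ω * gibbsState (coupledExponent Y K θ fun j => ξ j ω) (K i) ∂μ =
      ∫ ω, θ * (duhamelCorr (coupledExponent Y K θ fun j => ξ j ω) (K i) -
        gibbsState (coupledExponent Y K θ fun j => ξ j ω) (K i) ^ 2) ∂μ := by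
  classical
  have hX := isHermitian_coupledExponent hY hK θ
  have hcont := continuous_coupledExponent Y K θ
  have hgibbs := continuous_gibbsState hcont hX (K i)
  have hderiv : Continuous fun y => θ * (duhamelCorr (coupledExponent Y K θ y) (K i) -
      gibbsState (coupledExponent Y K θ y) (K i) ^ 2) :=
    ((continuous_duhamelCorr hcont hX (K i)).sub (hgibbs.pow 2)).const_mul θ
  have hmul := integrable_mul_gibbsState hY hK hξ θ (hK i) hK2
    (integrable_of_map_eq_gaussianReal (hξ i) hlaw)
  have hparts := integral_sub_mean_mul_of_iIndepFun hξ hindep hlaw hgibbs.measurable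
    hderiv.measurable (fun y x => hasDerivAt_gibbsState_update hY hK θ y i x)
    (integrable_gibbsState hY hK hξ θ (hK i) hK2)
    ((integrable_duhamelCorr_sub_sq hY hK hξ θ (hK i) hK2).const_mul θ)
    (by simpa only [sub_zero] using hmul)
  simpa only [sub_zero, NNReal.coe_one, one_mul] using hparts

theorem integral_gibbsState_interaction (hY : Y.IsHermitian) (hK : ∀ i, (K i).IsHermitian)
    (hK2 : ∀ i, K i * K i = 1) (hξ : ∀ i, Measurable (ξ i)) (hindep : iIndepFun ξ μ)
    (hlaw : ∀ i, μ.map (ξ i) = gaussianReal 0 1) (θ : ℝ) :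
    ∫ ω, gibbsState (coupledExponent Y K θ fun j => ξ j ω) (interaction K fun j => ξ j ω) ∂μ =
      ∫ ω, θ * ∑ i, (duhamelCorr (coupledExponent Y K θ fun j => ξ j ω) (K i) -
        gibbsState (coupledExponent Y K θ fun j => ξ j ω) (K i) ^ 2) ∂μ := by
  simp only [gibbsState_interaction, Finset.mul_sum]
  rw [integral_finsetSum _ fun i _ => integrable_mul_gibbsState hY hK hξ θ (hK i) (hK2 i)
      (integrable_of_map_eq_gaussianReal (hξ i) (hlaw i)),
    integral_finsetSum _ fun i _ =>
      (integrable_duhamelCorr_sub_sq hY hK hξ θ (hK i) (hK2 i)).const_mul θ]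
  exact Finset.sum_congr rfl fun i _ => integral_mul_gibbsState hY hK hξ hindep θ (hK2 i) (hlaw i)

theorem integral_const_sub_overlap (hY : Y.IsHermitian) (hK : ∀ i, (K i).IsHermitian)
    (hK2 : ∀ i, K i * K i = 1) (hξ : ∀ i, Measurable (ξ i)) (θ κ : ℝ) :
    ∫ ω, θ * ∑ i, (κ - gibbsState (coupledExponent Y K θ fun j => ξ j ω) (K i) ^ 2) ∂μ =
      θ * Fintype.card ι *
        (κ - ∫ ω, overlap (coupledExponent Y K θ fun j => ξ j ω) K ∂μ) := by
  simp only [Finset.sum_sub_distrib, ← card_mul_overlap, Finset.sum_const, Finset.card_univ,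
    nsmul_eq_mul, ← mul_sub, ← mul_assoc]
  rw [integral_const_mul, integral_sub (integrable_const κ) (integrable_overlap hY hK hK2 hξ θ),
    integral_const, probReal_univ, one_smul]

theorem integrable_const_sub_gibbsState_sq (hY : Y.IsHermitian) (hK : ∀ i, (K i).IsHermitian)
    (hK2 : ∀ i, K i * K i = 1) (hξ : ∀ i, Measurable (ξ i)) (θ κ : ℝ) :
    Integrable (fun ω => θ * ∑ i,
      (κ - gibbsState (coupledExponent Y K θ fun j => ξ j ω) (K i) ^ 2)) μ := by
  simp only [Finset.sum_sub_distrib, ← card_mul_overlap]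
  exact ((integrable_const _).sub ((integrable_overlap hY hK hK2 hξ θ).const_mul _)).const_mul θ

theorem integral_gibbsState_interaction_le (hY : Y.IsHermitian) (hK : ∀ i, (K i).IsHermitian)
    (hK2 : ∀ i, K i * K i = 1) (hξ : ∀ i, Measurable (ξ i)) (hindep : iIndepFun ξ μ)
    (hlaw : ∀ i, μ.map (ξ i) = gaussianReal 0 1) {θ : ℝ} (hθ : 0 ≤ θ) :
    ∫ ω, gibbsState (coupledExponent Y K θ fun j => ξ j ω) (interaction K fun j => ξ j ω) ∂μ ≤
      θ * Fintype.card ι *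
        (1 - ∫ ω, overlap (coupledExponent Y K θ fun j => ξ j ω) K ∂μ) := by
  rw [integral_gibbsState_interaction hY hK hK2 hξ hindep hlaw,
    ← integral_const_sub_overlap hY hK hK2 hξ]
  refine integral_mono ((integrable_finsetSum _ fun i _ =>
    integrable_duhamelCorr_sub_sq hY hK hξ θ (hK i) (hK2 i)).const_mul θ)
    (integrable_const_sub_gibbsState_sq hY hK hK2 hξ θ 1) fun ω => ?_
  dsimp only
  gcongr with i
  exact duhamelCorr_le_one (isHermitian_coupledExponent hY hK θ _) (hK i) (hK2 i)

theorem le_integral_gibbsState_interaction (hY : Y.IsHermitian) (hK : ∀ i, (K i).IsHermitian)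
    (hK2 : ∀ i, K i * K i = 1) (hξ : ∀ i, Measurable (ξ i)) (hindep : iIndepFun ξ μ)
    (hlaw : ∀ i, μ.map (ξ i) = gaussianReal 0 1) {θ κ : ℝ} (hθ : 0 ≤ θ)
    (hκ : ∀ y i, κ ≤ duhamelCorr (coupledExponent Y K θ y) (K i)) :
    θ * Fintype.card ι * (κ - ∫ ω, overlap (coupledExponent Y K θ fun j => ξ j ω) K ∂μ) ≤
      ∫ ω, gibbsState (coupledExponent Y K θ fun j => ξ j ω)
        (interaction K fun j => ξ j ω) ∂μ := by
  rw [integral_gibbsState_interaction hY hK hK2 hξ hindep hlaw,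
    ← integral_const_sub_overlap hY hK hK2 hξ]
  refine integral_mono (integrable_const_sub_gibbsState_sq hY hK hK2 hξ θ κ)
    ((integrable_finsetSum _ fun i _ =>
      integrable_duhamelCorr_sub_sq hY hK hξ θ (hK i) (hK2 i)).const_mul θ) fun ω => ?_
  dsimp only
  gcongr with i
  exact hκ _ i

end RandomInteraction

section SpinFlip

variable {N : ℕ}

theorem Sz_mul_self (j : Fin N) : Sz N j * Sz N j = 1 := by
  rw [Sz, diagonal_mul_diagonal, ← diagonal_one]
  congr 1
  ext σ
  split_ifs <;> simp

theorem isHermitian_Sz (j : Fin N) : (Sz N j).IsHermitian := by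
  refine isHermitian_diagonal_of_self_adjoint _ (funext fun σ => ?_)
  simp only [Pi.star_apply]
  split_ifs <;> simp

theorem commute_Sz_Sz (j k : Fin N) : Commute (Sz N j) (Sz N k) := by
  simp only [commute_iff_eq, Sz, diagonal_mul_diagonal, mul_comm]

theorem eq_update_flip_comm {σ τ : Conf N} {j : Fin N} :
    τ = Function.update σ j (1 - σ j) ↔ σ = Function.update τ j (1 - τ j) := by
  constructor <;> rintro rfl <;> simp

theorem isHermitian_Sx (j : Fin N) : (Sx N j).IsHermitian := by
  ext σ τ
  simp only [conjTranspose_apply, Sx, of_apply, eq_update_flip_comm (σ := τ), apply_ite star,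
    star_one, star_zero]

theorem Sx_mul_self (j : Fin N) : Sx N j * Sx N j = 1 := by
  ext σ τ
  simp only [Matrix.mul_apply, Sx, of_apply, ite_mul, one_mul, zero_mul, Finset.sum_ite_eq',
    Finset.mem_univ, if_true, one_apply, eq_comm (a := σ)]
  simp

theorem Sz_mul_Sx_mul_Sz_self (j : Fin N) : Sz N j * Sx N j * Sz N j = -Sx N j := by
  ext σ τ
  simp only [Sz, mul_diagonal, diagonal_mul, Sx, of_apply]
  by_cases hτ : τ = Function.update σ j (1 - σ j)
  · subst hτ
    rcases Fin.exists_fin_two.1 ⟨σ j, rfl⟩ with h | h <;> simp [h]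
  · simp [hτ]

theorem Sz_mul_Sx_mul_Sz_of_ne {j k : Fin N} (hjk : j ≠ k) :
    Sz N j * Sx N k * Sz N j = Sx N k := by
  ext σ τ
  simp only [Sz, mul_diagonal, diagonal_mul, Sx, of_apply]
  by_cases hτ : τ = Function.update σ k (1 - σ k)
  · subst hτ
    rw [Function.update_of_ne hjk]
    split_ifs <;> simp
  · simp [hτ]

theorem isHermitian_sum_Sx (N : ℕ) : (∑ l, Sx N l).IsHermitian :=
  isSelfAdjoint_sum _ fun l _ => isHermitian_Sx l

theorem Sz_mul_sum_Sx_mul_Sz (j : Fin N) :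
    Sz N j * (∑ l, Sx N l) * Sz N j = ∑ l, Sx N l - (2 : ℝ) • Sx N j := by
  have hflip (l : Fin N) :
      Sz N j * Sx N l * Sz N j = Sx N l - if j = l then (2 : ℝ) • Sx N j else 0 := by
    split_ifs with hjl
    · rw [← hjl, Sz_mul_Sx_mul_Sz_self, two_smul, sub_add_cancel_left]
    · rw [Sz_mul_Sx_mul_Sz_of_ne hjl, sub_zero]
  simp only [Matrix.mul_sum, Matrix.sum_mul, hflip, Finset.sum_sub_distrib, Finset.sum_ite_eq,
    Finset.mem_univ, if_true]

end SpinFlip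

section TransverseField

variable {N : ℕ} {Y : Matrix (Conf N) (Conf N) ℂ} {t : ℝ}

theorem isHermitian_add_smul_sum_Sx (hY : Y.IsHermitian) (t : ℝ) :
    (Y + t • ∑ l, Sx N l).IsHermitian :=
  hY.add (IsSelfAdjoint.smul (.all t) (isHermitian_sum_Sx N))

theorem Sz_mul_mul_Sz_of_commute {j : Fin N} (hYj : Commute (Sz N j) Y) :
    Sz N j * Y * Sz N j = Y := by
  rw [hYj.eq, Matrix.mul_assoc, Sz_mul_self, Matrix.mul_one]

theorem Sz_mul_add_smul_sum_Sx_mul_Sz {j : Fin N} (hYj : Commute (Sz N j) Y) (t : ℝ) :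
    Sz N j * (Y + t • ∑ l, Sx N l) * Sz N j = Y + t • ∑ l, Sx N l - (2 * t) • Sx N j := by
  rw [Matrix.mul_add, Matrix.add_mul, Matrix.mul_smul, Matrix.smul_mul, Sz_mul_sum_Sx_mul_Sz,
    Sz_mul_mul_Sz_of_commute hYj]
  module

theorem gibbsState_Sx_eq_zero {j : Fin N} (hYj : Commute (Sz N j) Y) :
    gibbsState Y (Sx N j) = 0 :=
  gibbsState_eq_zero_of_conj (Sz_mul_self j) (Sz_mul_mul_Sz_of_commute hYj)
    (Sz_mul_Sx_mul_Sz_self j)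

theorem gibbsState_Sx_le_tanh (hY : Y.IsHermitian) {j : Fin N} (hYj : Commute (Sz N j) Y)
    (ht : 0 ≤ t) : gibbsState (Y + t • ∑ l, Sx N l) (Sx N j) ≤ Real.tanh t := by
  have hrest : Sz N j * (Y + t • ∑ l, Sx N l - t • Sx N j) * Sz N j =
      Y + t • ∑ l, Sx N l - t • Sx N j := by
    rw [Matrix.mul_sub, Matrix.sub_mul, Sz_mul_add_smul_sum_Sx_mul_Sz hYj, Matrix.mul_smul,
      Matrix.smul_mul, Sz_mul_Sx_mul_Sz_self]
    module
  have hherm : (Y + t • ∑ l, Sx N l - t • Sx N j).IsHermitian :=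
    (isHermitian_add_smul_sum_Sx hY t).sub (IsSelfAdjoint.smul (.all t) (isHermitian_Sx j))
  simpa only [sub_add_cancel] using gibbsState_add_smul_le_tanh hherm (isHermitian_Sx j)
    (Sx_mul_self j) (Sz_mul_self j) hrest (Sz_mul_Sx_mul_Sz_self j) ht

theorem log_partitionFn_le_add_smul_sum_Sx (hY : Y.IsHermitian)
    (hYz : ∀ j, Commute (Sz N j) Y) (t : ℝ) :
    Real.log (partitionFn Y) ≤ Real.log (partitionFn (Y + t • ∑ l, Sx N l)) := by
  have hconvex := log_partitionFn_add_gibbsState_le hY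
    (IsSelfAdjoint.smul (.all t) (isHermitian_sum_Sx N))
  simpa only [map_smul, map_sum, gibbsState_Sx_eq_zero (hYz _), Finset.sum_const_zero, smul_zero,
    add_zero] using hconvex

theorem log_partitionFn_add_smul_sum_Sx_le (hY : Y.IsHermitian)
    (hYz : ∀ j, Commute (Sz N j) Y) (ht : 0 ≤ t) :
    Real.log (partitionFn (Y + t • ∑ l, Sx N l)) ≤
      Real.log (partitionFn Y) + N * Real.log (Real.cosh t) := by
  have hderiv (s : ℝ) : HasDerivAt (fun s : ℝ => Real.log (partitionFn (Y + s • ∑ l, Sx N l)) -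
      N * Real.log (Real.cosh s))
      (gibbsState (Y + s • ∑ l, Sx N l) (∑ l, Sx N l) - N * Real.tanh s) s := by
    have hcosh := ((Real.hasDerivAt_cosh s).log (Real.cosh_pos s).ne').const_mul (N : ℝ)
    rw [← Real.tanh_eq_sinh_div_cosh] at hcosh
    exact (hasDerivAt_log_partitionFn hY (isHermitian_sum_Sx N) s).sub hcosh
  have hslope (s : ℝ) (hs : 0 ≤ s) :
      gibbsState (Y + s • ∑ l, Sx N l) (∑ l, Sx N l) ≤ N * Real.tanh s := by
    simpa using Finset.sum_le_sum fun j (_ : j ∈ Finset.univ) =>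
      gibbsState_Sx_le_tanh hY (hYz j) hs
  have hanti := antitoneOn_of_deriv_nonpos (convex_Ici 0)
    (fun s _ => (hderiv s).continuousAt.continuousWithinAt)
    (fun s _ => (hderiv s).differentiableAt.differentiableWithinAt) fun s hs => by
      rw [(hderiv s).deriv]
      exact sub_nonpos.2 (hslope s (interior_subset hs))
  have hle := hanti Set.self_mem_Ici ht ht
  simp only [zero_smul, add_zero, Real.cosh_zero, Real.log_one, mul_zero, sub_zero] at hle
  linarith

theorem gibbsState_add_smul_sum_Sx_le {V : Matrix (Conf N) (Conf N) ℂ} (hY : Y.IsHermitian)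
    (hYz : ∀ j, Commute (Sz N j) Y) (hV : V.IsHermitian) (hVz : ∀ j, Commute (Sz N j) V)
    (ht : 0 ≤ t) :
    gibbsState (Y + t • ∑ l, Sx N l) V ≤ gibbsState (Y + V) V + N * Real.log (Real.cosh t) := by
  have hforward := log_partitionFn_add_gibbsState_le (isHermitian_add_smul_sum_Sx hY t) hV
  have hbackward := log_partitionFn_add_gibbsState_le (hY.add hV) hV.neg
  rw [map_neg, add_neg_cancel_right] at hbackward
  have hupper := log_partitionFn_add_smul_sum_Sx_le (hY.add hV) (fun j => (hYz j).add_right (hVz j))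
    ht
  rw [add_right_comm] at hupper
  have hlower := log_partitionFn_le_add_smul_sum_Sx hY hYz t
  linarith

theorem isHermitian_Sz_mul_Sz (j k : Fin N) : (Sz N j * Sz N k).IsHermitian :=
  (IsSelfAdjoint.commute_iff (isHermitian_Sz j) (isHermitian_Sz k)).1 (commute_Sz_Sz j k)

theorem Sz_mul_Sz_mul_self (j k : Fin N) : Sz N j * Sz N k * (Sz N j * Sz N k) = 1 := by
  rw [(commute_Sz_Sz k j).mul_mul_mul_comm, Sz_mul_self, Sz_mul_self, Matrix.one_mul]

theorem commutator_Sz_mul_Sz {j k : Fin N} (hjk : j ≠ k) (hYz : ∀ l, Commute (Sz N l) Y) (t : ℝ) :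
    ((Y + t • ∑ l, Sx N l) * (Sz N j * Sz N k) - Sz N j * Sz N k * (Y + t • ∑ l, Sx N l)) *
      (Sz N j * Sz N k) = (2 * t) • (Sx N j + Sx N k) := by
  have hconj : Sz N j * Sz N k * (Y + t • ∑ l, Sx N l) * (Sz N j * Sz N k) =
      Sz N j * (Sz N k * (Y + t • ∑ l, Sx N l) * Sz N k) * Sz N j := by
    nth_rewrite 2 [(commute_Sz_Sz j k).eq]
    simp only [Matrix.mul_assoc]
  rw [Matrix.sub_mul, Matrix.mul_assoc, Sz_mul_Sz_mul_self, Matrix.mul_one, hconj,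
    Sz_mul_add_smul_sum_Sx_mul_Sz (hYz k), Matrix.mul_sub, Matrix.sub_mul,
    Sz_mul_add_smul_sum_Sx_mul_Sz (hYz j), Matrix.mul_smul, Matrix.smul_mul,
    Sz_mul_Sx_mul_Sz_of_ne hjk]
  module

theorem le_duhamelCorr_Sz_mul_Sz {j k : Fin N} (hjk : j ≠ k) (hY : Y.IsHermitian)
    (hYz : ∀ l, Commute (Sz N l) Y) (ht : 0 ≤ t) :
    1 - 2 * (t * Real.tanh t) ≤ duhamelCorr (Y + t • ∑ l, Sx N l) (Sz N j * Sz N k) := by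
  have hX := isHermitian_add_smul_sum_Sx hY t
  have hcorr := le_duhamelCorr hX (isHermitian_Sz_mul_Sz j k)
  rw [Sz_mul_Sz_mul_self, gibbsState_one hX, commutator_Sz_mul_Sz hjk hYz, map_smul, map_add,
    smul_eq_mul] at hcorr
  have hj := mul_le_mul_of_nonneg_left (gibbsState_Sx_le_tanh hY (hYz j) ht) ht
  have hk := mul_le_mul_of_nonneg_left (gibbsState_Sx_le_tanh hY (hYz k) ht) ht
  linarith

end TransverseField

theorem tanh_le_self {t : ℝ} (ht : 0 ≤ t) : Real.tanh t ≤ t := by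
  have hderiv (s : ℝ) : HasDerivAt (fun s => Real.sinh s / Real.cosh s) (Real.cosh s ^ 2)⁻¹ s :=
    ((Real.hasDerivAt_sinh s).div (Real.hasDerivAt_cosh s) (Real.cosh_pos s).ne').congr_deriv (by
      rw [← sq, ← sq, Real.cosh_sq_sub_sinh_sq, one_div])
  have hslope (s : ℝ) : deriv (fun s => Real.sinh s / Real.cosh s) s ≤ 1 := by
    rw [(hderiv s).deriv]
    exact inv_le_one_of_one_le₀ (one_le_pow₀ (Real.one_le_cosh s))
  simpa [Real.tanh_eq_sinh_div_cosh] using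
    image_sub_le_mul_sub_of_deriv_le (fun s => (hderiv s).differentiableAt) hslope ht

section SherringtonKirkpatrick

/-- The pairs of sites `j < k`, which index the interaction terms of the model. -/
abbrev Pair (N : ℕ) := {q : Fin N × Fin N // q.1 < q.2}

/-- The interaction term `S_j^z S_k^z` of the pair `j < k`. -/
def pairSpin (N : ℕ) (p : Pair N) : Matrix (Conf N) (Conf N) ℂ := Sz N p.1.1 * Sz N p.1.2

/-- The exponent `-βH_N` with `c = βJ`, `d = βb`, as a function of the couplings `y`. -/
def skExponent (N : ℕ) (c d : ℝ) : (Pair N → ℝ) → Matrix (Conf N) (Conf N) ℂ :=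
  coupledExponent (d • ∑ l, Sx N l) (pairSpin N) (c / √N)

theorem sum_sum_ite_lt_eq_sum_pair {M : Type*} [AddCommMonoid M] {N : ℕ}
    (f : Fin N → Fin N → M) :
    (∑ j, ∑ k, if j < k then f j k else 0) = ∑ p : Pair N, f p.1.1 p.1.2 := by
  rw [← Fintype.sum_prod_type' fun j k => if j < k then f j k else 0, ← Finset.sum_filter]
  exact Finset.sum_subtype _ (by simp) fun q : Fin N × Fin N => f q.1 q.2

theorem card_pair (N : ℕ) : (Fintype.card (Pair N) : ℝ) = N * (N - 1) / 2 := by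
  rw [Fintype.card_subtype, Fintype.card_product_filter_lt, Fintype.card_fin,
    Nat.cast_choose_two]

variable {N : ℕ}

theorem isHermitian_pairSpin (p : Pair N) : (pairSpin N p).IsHermitian :=
  isHermitian_Sz_mul_Sz p.1.1 p.1.2

theorem pairSpin_mul_self (p : Pair N) : pairSpin N p * pairSpin N p = 1 :=
  Sz_mul_Sz_mul_self p.1.1 p.1.2

theorem commute_Sz_interaction (j : Fin N) (y : Pair N → ℝ) :
    Commute (Sz N j) (interaction (pairSpin N) y) :=
  .sum_right _ _ _ fun p _ =>
    ((commute_Sz_Sz j p.1.1).mul_right (commute_Sz_Sz j p.1.2)).smul_right (y p)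

theorem isHermitian_smul_interaction (θ : ℝ) (y : Pair N → ℝ) :
    (θ • interaction (pairSpin N) y).IsHermitian :=
  IsSelfAdjoint.smul (.all θ) (isHermitian_interaction isHermitian_pairSpin y)

theorem skExponent_eq (c d : ℝ) (y : Pair N → ℝ) :
    skExponent N c d y = (c / √N) • interaction (pairSpin N) y + d • ∑ l, Sx N l :=
  add_comm _ _

theorem isHermitian_smul_sum_Sx (N : ℕ) (d : ℝ) : (d • ∑ l, Sx N l).IsHermitian :=
  IsSelfAdjoint.smul (.all d) (isHermitian_sum_Sx N)

theorem isHermitian_skExponent (c d : ℝ) (y : Pair N → ℝ) : (skExponent N c d y).IsHermitian :=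
  isHermitian_coupledExponent (isHermitian_smul_sum_Sx N d) isHermitian_pairSpin _ y

theorem neg_one_smul_HN (c d : ℝ) (g : Fin N → Fin N → ℝ) :
    (-1 : ℝ) • HN N c d g = skExponent N c d fun p => g p.1.1 p.1.2 := by
  rw [HN, UN, sum_sum_ite_lt_eq_sum_pair, skExponent_eq, interaction]
  simp only [pairSpin]
  module

theorem qN_eq_overlap (c d : ℝ) (g : Fin N → Fin N → ℝ) :
    qN N 1 c d g = overlap (skExponent N c d fun p => g p.1.1 p.1.2) (pairSpin N) := by
  have hgibbs (A : Matrix (Conf N) (Conf N) ℂ) :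
      gibbs 1 (HN N c d g) A = gibbsState (skExponent N c d fun p => g p.1.1 p.1.2) A := by
    rw [gibbs_eq_gibbsState (by rw [neg_one_smul_HN]; exact isHermitian_skExponent c d _),
      neg_one_smul_HN]
  simp only [qN, hgibbs]
  rw [sum_sum_ite_lt_eq_sum_pair fun j k =>
    gibbsState (skExponent N c d fun p => g p.1.1 p.1.2) (Sz N j * Sz N k) ^ 2, overlap, card_pair,
    div_div_eq_mul_div, div_mul_eq_mul_div, mul_comm]
  rfl

theorem qN_nonneg (c d : ℝ) (g : Fin N → Fin N → ℝ) : 0 ≤ qN N 1 c d g :=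
  (overlap_nonneg _ _).trans_eq (qN_eq_overlap c d g).symm

theorem qN_le_one (c d : ℝ) (g : Fin N → Fin N → ℝ) : qN N 1 c d g ≤ 1 :=
  (qN_eq_overlap c d g).trans_le
    (overlap_le_one (isHermitian_skExponent c d _) isHermitian_pairSpin pairSpin_mul_self)

theorem le_duhamelCorr_pairSpin (c : ℝ) {d : ℝ} (hd : 0 ≤ d) (y : Pair N → ℝ) (p : Pair N) :
    1 - 2 * (d * Real.tanh d) ≤ duhamelCorr (skExponent N c d y) (pairSpin N p) := by
  rw [skExponent_eq]
  exact le_duhamelCorr_Sz_mul_Sz p.2.ne (isHermitian_smul_interaction _ y)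
    (fun l => (commute_Sz_interaction l y).smul_right _) hd

theorem gibbsState_skExponent_interaction_le (c a : ℝ) {d : ℝ} (hd : 0 ≤ d) (y : Pair N → ℝ) :
    a / √N * gibbsState (skExponent N c d y) (interaction (pairSpin N) y) ≤
      a / √N * gibbsState (skExponent N (c + a) 0 y) (interaction (pairSpin N) y) +
        N * Real.log (Real.cosh d) := by
  have hflip (θ : ℝ) (l : Fin N) : Commute (Sz N l) (θ • interaction (pairSpin N) y) :=
    (commute_Sz_interaction l y).smul_right θ
  have hle := gibbsState_add_smul_sum_Sx_le (isHermitian_smul_interaction (c / √N) y)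
    (hflip _) (isHermitian_smul_interaction (a / √N) y) (hflip _) hd
  simpa only [skExponent_eq, zero_smul, add_zero, add_div, add_smul, map_smul, smul_eq_mul]
    using hle

variable {Ω : Type*} [MeasurableSpace Ω] {μ : Measure Ω}

theorem integral_qN_nonneg (g : Ω → Fin N → Fin N → ℝ) (c d : ℝ) :
    0 ≤ ∫ ω, qN N 1 c d (g ω) ∂μ :=
  integral_nonneg fun ω => qN_nonneg c d (g ω)

variable [IsProbabilityMeasure μ]

theorem integral_qN_le_one (g : Ω → Fin N → Fin N → ℝ) (c d : ℝ) :
    ∫ ω, qN N 1 c d (g ω) ∂μ ≤ 1 :=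
  (integral_mono_of_nonneg (.of_forall fun ω => qN_nonneg c d (g ω)) (integrable_const 1)
    (.of_forall fun ω => qN_le_one c d (g ω))).trans_eq (by simp)

theorem integral_gibbsState_skExponent_interaction_le {ξ : Pair N → Ω → ℝ}
    (hξ : ∀ p, Measurable (ξ p)) (hint : ∀ p, Integrable (ξ p) μ) (c a : ℝ) {d : ℝ}
    (hd : 0 ≤ d) :
    a / √N * ∫ ω, gibbsState (skExponent N c d fun p => ξ p ω)
        (interaction (pairSpin N) fun p => ξ p ω) ∂μ ≤
      a / √N * ∫ ω, gibbsState (skExponent N (c + a) 0 fun p => ξ p ω)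
        (interaction (pairSpin N) fun p => ξ p ω) ∂μ + N * Real.log (Real.cosh d) := by
  have hintegrable (c d : ℝ) := integrable_gibbsState_interaction (isHermitian_smul_sum_Sx N d)
    isHermitian_pairSpin pairSpin_mul_self hξ hint (c / √N)
  have hle := integral_mono ((hintegrable c d).const_mul (a / √N))
    (((hintegrable (c + a) 0).const_mul (a / √N)).add (integrable_const _))
    fun ω => gibbsState_skExponent_interaction_le c a hd fun p => ξ p ω
  simp only [Pi.add_apply] at hle
  rwa [integral_const_mul, integral_add ((hintegrable (c + a) 0).const_mul _) (integrable_const _),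
    integral_const_mul, integral_const, probReal_univ, one_smul] at hle

theorem mul_sub_integral_overlap_le (hN : 2 ≤ N) {ξ : Pair N → Ω → ℝ}
    (hξ : ∀ p, Measurable (ξ p)) (hindep : iIndepFun ξ μ)
    (hlaw : ∀ p, μ.map (ξ p) = gaussianReal 0 1) {a c d : ℝ} (ha : 0 ≤ a) (hc : 0 ≤ c)
    (hd : 0 ≤ d) :
    a * (c * (1 - 2 * (d * Real.tanh d) -
        ∫ ω, overlap (skExponent N c d fun p => ξ p ω) (pairSpin N) ∂μ)) ≤
      a * ((c + a) *
        (1 - ∫ ω, overlap (skExponent N (c + a) 0 fun p => ξ p ω) (pairSpin N) ∂μ)) +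
        N / (N - 1) * (2 * Real.log (Real.cosh d)) := by
  have hlower := le_integral_gibbsState_interaction (isHermitian_smul_sum_Sx N d)
    isHermitian_pairSpin pairSpin_mul_self hξ hindep hlaw (by positivity : 0 ≤ c / √N)
    (le_duhamelCorr_pairSpin c hd)
  have hupper := integral_gibbsState_interaction_le (isHermitian_smul_sum_Sx N 0)
    isHermitian_pairSpin pairSpin_mul_self hξ hindep hlaw (by positivity : 0 ≤ (c + a) / √N)
  have henergy := integral_gibbsState_skExponent_interaction_le hξ
    (fun p => integrable_of_map_eq_gaussianReal (hξ p) (hlaw p)) c a hd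
  have hN' : (1 : ℝ) < N := by exact_mod_cast hN
  have hcard (x y : ℝ) : a / √N * (x / √N * Fintype.card (Pair N) * y) =
      (N - 1) / 2 * (a * (x * y)) := by
    rw [card_pair]
    field_simp
    rw [Real.sq_sqrt (by positivity)]
    field
  have hchain := ((mul_le_mul_of_nonneg_left hlower (by positivity)).trans henergy).trans
    (add_le_add_left (mul_le_mul_of_nonneg_left hupper (by positivity)) _)
  rw [hcard, hcard] at hchain
  refine le_of_mul_le_mul_left (hchain.trans_eq ?_) (half_pos (sub_pos.2 hN'))
  have hN1 : (N : ℝ) - 1 ≠ 0 := (sub_pos.2 hN').ne'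
  rw [mul_add]
  congr 1
  field

theorem sqrt_two_mul_log_cosh_le_self {d : ℝ} (hd : 0 ≤ d) :
    √(2 * Real.log (Real.cosh d)) ≤ d := by
  refine Real.sqrt_le_iff.2 ⟨hd, ?_⟩
  have hlog := (Real.log_le_iff_le_exp (Real.cosh_pos d)).2 (Real.cosh_le_exp_half_sq d)
  linarith

theorem mul_sub_integral_qN_le (hN : 4 ≤ N) {g : Ω → Fin N → Fin N → ℝ}
    (hmeas : ∀ j k, Measurable fun ω => g ω j k)
    (hgauss : ∀ j k, j < k → μ.map (fun ω => g ω j k) = gaussianReal 0 1)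
    (hindep : iIndepFun (fun (p : Pair N) ω => g ω p.1.1 p.1.2) μ) {c d : ℝ} (hc : 0 ≤ c)
    (hd : 0 < d) :
    c * (1 - 2 * (d * Real.tanh d) - ∫ ω, qN N 1 c d (g ω) ∂μ) ≤
      (c + √(2 * Real.log (Real.cosh d))) *
        (1 - ∫ ω, qN N 1 (c + √(2 * Real.log (Real.cosh d))) 0 (g ω) ∂μ) +
        4 / 3 * √(2 * Real.log (Real.cosh d)) := by
  have hlog : 0 < 2 * Real.log (Real.cosh d) :=
    mul_pos two_pos (Real.log_pos (Real.one_lt_cosh.2 hd.ne'))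
  have ha := Real.sqrt_pos.2 hlog
  have ha2 := Real.sq_sqrt hlog.le
  have hmain := mul_sub_integral_overlap_le (by lia) (fun p => hmeas p.1.1 p.1.2) hindep
    (fun p => hgauss p.1.1 p.1.2 p.2) ha.le hc hd.le
  simp only [← qN_eq_overlap] at hmain
  set a := √(2 * Real.log (Real.cosh d))
  rw [← ha2] at hmain
  have hratio : (N : ℝ) / (N - 1) ≤ 4 / 3 := by
    have hN' : (4 : ℝ) ≤ N := by exact_mod_cast hN
    rw [div_le_div_iff₀ (by linarith) (by norm_num)]
    linarith
  have hcost := mul_le_mul_of_nonneg_right hratio (sq_nonneg a)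
  exact le_of_mul_le_mul_left (by linarith) ha

theorem integral_qN_sub_le_of_lt (hN : 4 ≤ N) {g : Ω → Fin N → Fin N → ℝ}
    (hmeas : ∀ j k, Measurable fun ω => g ω j k)
    (hgauss : ∀ j k, j < k → μ.map (fun ω => g ω j k) = gaussianReal 0 1)
    (hindep : iIndepFun (fun (p : Pair N) ω => g ω p.1.1 p.1.2) μ) {c d : ℝ} (hc : 1 ≤ c)
    (hd : 0 < d) (hd3 : d < 1 / 3) :
    ∫ ω, qN N 1 (c + √(2 * Real.log (Real.cosh d))) 0 (g ω) ∂μ - 3 * d ≤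
      ∫ ω, qN N 1 c d (g ω) ∂μ := by
  have hmain := mul_sub_integral_qN_le hN hmeas hgauss hindep (zero_le_one.trans hc) hd
  have hQ := integral_qN_nonneg (μ := μ) g (c + √(2 * Real.log (Real.cosh d))) 0
  have ha := sqrt_two_mul_log_cosh_le_self hd.le
  have haQ := mul_nonneg (Real.sqrt_nonneg (2 * Real.log (Real.cosh d))) hQ
  have htanh : c * (d * Real.tanh d) ≤ c * (d * (1 / 3)) := by
    gcongr
    exact (tanh_le_self hd.le).trans hd3.le
  have hcd : d ≤ c * d := le_mul_of_one_le_left hd.le hc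
  have hgap : c * (∫ ω, qN N 1 (c + √(2 * Real.log (Real.cosh d))) 0 (g ω) ∂μ - 3 * d) ≤
      c * ∫ ω, qN N 1 c d (g ω) ∂μ := by linarith
  exact le_of_mul_le_mul_left hgap (zero_lt_one.trans_le hc)

theorem integral_qN_sub_le (hN : 4 ≤ N) {g : Ω → Fin N → Fin N → ℝ}
    (hmeas : ∀ j k, Measurable fun ω => g ω j k)
    (hgauss : ∀ j k, j < k → μ.map (fun ω => g ω j k) = gaussianReal 0 1)
    (hindep : iIndepFun (fun (p : Pair N) ω => g ω p.1.1 p.1.2) μ) {c d : ℝ} (hc : 1 ≤ c)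
    (hd : 0 ≤ d) :
    ∫ ω, qN N 1 (c + √(2 * Real.log (Real.cosh d))) 0 (g ω) ∂μ - 3 * d ≤
      ∫ ω, qN N 1 c d (g ω) ∂μ := by
  rcases hd.eq_or_lt with rfl | hd0
  · simp
  rcases lt_or_ge d (1 / 3) with hd3 | hd3
  · exact integral_qN_sub_le_of_lt hN hmeas hgauss hindep hc hd0 hd3
  · linarith [integral_qN_le_one (μ := μ) g (c + √(2 * Real.log (Real.cosh d))) 0,
      integral_qN_nonneg (μ := μ) g c d]

theorem qbar_sub_le {g : (N : ℕ) → Ω → Fin N → Fin N → ℝ} {c d c' d' e : ℝ}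
    (hle : ∀ᶠ N in Filter.atTop,
      ∫ ω, qN N 1 c' d' (g N ω) ∂μ - e ≤ ∫ ω, qN N 1 c d (g N ω) ∂μ) :
    qbar μ g c' d' - e ≤ qbar μ g c d := by
  have hbelow (c d : ℝ) :
      Filter.atTop.IsBoundedUnder (· ≥ ·) fun N => ∫ ω, qN N 1 c d (g N ω) ∂μ :=
    Filter.isBoundedUnder_of ⟨0, fun N => integral_qN_nonneg (g N) c d⟩
  have hcobounded (c d : ℝ) :
      Filter.atTop.IsCoboundedUnder (· ≥ ·) fun N => ∫ ω, qN N 1 c d (g N ω) ∂μ :=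
    (Filter.isBoundedUnder_of ⟨1, fun N => integral_qN_le_one (g N) c d⟩).isCoboundedUnder_ge
  rw [qbar, ← liminf_sub_const _ _ e (hcobounded c' d') (hbelow c' d')]
  exact Filter.liminf_le_liminf hle
    (Filter.isBoundedUnder_of ⟨-e, fun N => by linarith [integral_qN_nonneg (μ := μ) (g N) c' d']⟩)
    (hcobounded c d)

end SherringtonKirkpatrick

theorem stmt15
    {Ω : Type*} [MeasurableSpace Ω] (μ : Measure Ω) [IsProbabilityMeasure μ]
    (β J b : ℝ) (hβ : 0 < β) (hJ : 0 < J) (hb : 0 ≤ b) (hβJ : 1 ≤ β * J)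
    (g : (N : ℕ) → Ω → Fin N → Fin N → ℝ)
    (hmeas : ∀ (N : ℕ) (j k : Fin N), Measurable fun ω => g N ω j k)
    (hgauss : ∀ (N : ℕ) (j k : Fin N), j < k →
      Measure.map (fun ω => g N ω j k) μ = gaussianReal 0 1)
    (hindep : ∀ N : ℕ, iIndepFun
      (fun (p : {q : Fin N × Fin N // q.1 < q.2}) ω => g N ω p.1.1 p.1.2) μ) :
    qbar μ g (β * J) (β * b)
      ≥ qbar μ g (β * J + Real.sqrt (2 * Real.log (Real.cosh (β * b)))) 0
          - 3 * (β * b) := by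
  refine qbar_sub_le ?_
  filter_upwards [Filter.eventually_ge_atTop 4] with N hN
  exact integral_qN_sub_le hN (hmeas N) (hgauss N) (hindep N) hβJ (mul_nonneg hβ.le hb)
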